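/- Let μ be a probability measure on ℝ with infinite support contained in [−M, M], with orthonormal polynomials {p_n}, CD kernel K_n, a_{n+1} = κ_n/κ_{n+1}, and dρ_n(x) = dx/(π(a_{n+1}² p_{n+1}(x)² + p_n(x)²)). Then for every k ∈ ℕ and all n ≥ k, ∫_{|x| > M+1} |x|^k K_{n−k}(x, x; μ) dρ_n(x) ≤ M^{2k}/(M+1)^k; in particular this integral is bounded uniformly in n. -/

import Mathlib

open MeasureTheory Polynomial Filter
open scoped ENNReal Real

/-- The topological support of a measure. -/
def measSupport {α : Type*} [TopologicalSpace α] [MeasurableSpace α] (μ : Measure α) : Set α :=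
  {x | ∀ U : Set α, IsOpen U → x ∈ U → μ U ≠ 0}

/-!
Write `K_n(x) = ∑_{j ≤ n} p_j(x)²` and consider the Prüfer variables
`r² = a_{n+1}² p_{n+1}² + p_n²` and `θ = arctan (a_{n+1} p_{n+1} / p_n)`.

Cauchy–Schwarz together with the reproducing property gives `q(x)² ≤ K_n(x) ∫ q² dμ` for every
polynomial `q` of degree at most `n`. For `q = X ^ k * K_{n-k}(x, ·)` this reads
`x ^ (2k) K_{n-k}(x) ≤ M ^ (2k) K_n(x)`, since `|y| ≤ M` on the support of `μ`. It remains to bound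
the integral of `K_n / r²` over `{|x| > M}` by `π`. By the confluent Christoffel–Darboux formula
`K_n / r²` is `θ'`, and `∫ (x - y) K_n(x, y)² dμ(y) = a_{n+1} p_{n+1}(x) p_n(x)` shows that
`p_n` has no zero outside `[-M, M]` and that `θ` takes values in `[0, π/2]` to the right of this
interval and in `[-π/2, 0]` to its left. So each of the two half-lines contributes at most `π/2`.
-/

theorem mul_mem_degreeLT_add {R : Type*} [Semiring R] {k N : ℕ} {q r : R[X]} (hq : q.degree ≤ k)
    (hr : r ∈ degreeLT R N) : q * r ∈ degreeLT R (N + k) := by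
  rw [mem_degreeLT] at hr ⊢
  calc (q * r).degree ≤ q.degree + r.degree := degree_mul_le q r
    _ ≤ k + r.degree := by gcongr
    _ < k + N := WithBot.add_lt_add_left (WithBot.natCast_ne_bot k) hr
    _ = (N + k : ℕ) := by rw [Nat.cast_add, add_comm]

theorem integrable_and_integral_le_of_lintegral_ofReal_le {α : Type*} [MeasurableSpace α]
    {μ : Measure α} {f : α → ℝ} {b : ℝ} (hf : AEStronglyMeasurable f μ) (hf0 : 0 ≤ᵐ[μ] f)
    (hb : 0 ≤ b) (hle : ∫⁻ x, ENNReal.ofReal (f x) ∂μ ≤ ENNReal.ofReal b) :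
    Integrable f μ ∧ ∫ x, f x ∂μ ≤ b := by
  have hint : Integrable f μ :=
    (lintegral_ofReal_ne_top_iff_integrable hf hf0).1 (hle.trans_lt ENNReal.ofReal_lt_top).ne
  rw [← ofReal_integral_eq_lintegral_ofReal hint hf0, ENNReal.ofReal_le_ofReal_iff hb] at hle
  exact ⟨hint, hle⟩

theorem setLIntegral_deriv_le_of_mapsTo_Icc {f f' : ℝ → ℝ} {s : Set ℝ} {α β : ℝ}
    (hs : Convex ℝ s) (hf : ∀ x ∈ s, HasDerivAt f (f' x) x) (hf' : ∀ x ∈ s, 0 ≤ f' x)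
    (hmaps : Set.MapsTo f s (Set.Icc α β)) :
    ∫⁻ x in s, ENNReal.ofReal (f' x) ≤ ENNReal.ofReal (β - α) := by
  have hmono : MonotoneOn f s :=
    monotoneOn_of_hasDerivWithinAt_nonneg hs (fun x hx ↦ (hf x hx).continuousAt.continuousWithinAt)
      (fun x hx ↦ (hf x (interior_subset hx)).hasDerivWithinAt)
      fun x hx ↦ hf' x (interior_subset hx)
  rw [lintegral_deriv_eq_volume_image_of_monotoneOn hs.ordConnected.measurableSet
    (fun x hx ↦ (hf x hx).hasDerivWithinAt) hmono, ← Real.volume_Icc]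
  exact measure_mono hmaps.image_subset

section AlgebraicTheory

variable {F : Type*} [Field F] {L : F[X] →ₗ[F] F} {S : Polynomial.Sequence F}

/-- The polynomials `S m`, of degree `m`, are orthonormal for the bilinear form `L (q * r)`, the
functional `L` playing the role of integration against a measure. -/
def IsOrthonormalFor (L : F[X] →ₗ[F] F) (S : Polynomial.Sequence F) : Prop :=
  ∀ m l, L (S m * S l) = if m = l then 1 else 0

/-- The Christoffel–Darboux kernel `K_n(x, ·)`, as a polynomial in its second variable. -/
noncomputable def cdKernel (S : Polynomial.Sequence F) (n : ℕ) (x : F) : F[X] :=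
  ∑ j ∈ Finset.range (n + 1), (S j).eval x • S j

/-- The off-diagonal Jacobi coefficient `a_{n+1} = κ_n / κ_{n+1}`, where `κ_m` is the leading
coefficient of `S m`. -/
noncomputable def jacobiCoeff (S : Polynomial.Sequence F) (n : ℕ) : F :=
  (S n).leadingCoeff / (S (n + 1)).leadingCoeff

theorem sequence_mem_degreeLT (S : Polynomial.Sequence F) {j N : ℕ} (hj : j < N) :
    S j ∈ degreeLT F N := by
  rw [mem_degreeLT, S.degree_eq]
  exact_mod_cast hj

theorem span_sequence_eq_degreeLT (S : Polynomial.Sequence F) (N : ℕ) :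
    Submodule.span F (S '' Set.Iio N) = degreeLT F N :=
  S.span_degreeLT fun i _ ↦ (leadingCoeff_ne_zero.2 (S.ne_zero i)).isUnit

theorem cdKernel_mem_degreeLT (S : Polynomial.Sequence F) (n : ℕ) (x : F) :
    cdKernel S n x ∈ degreeLT F (n + 1) :=
  Submodule.sum_mem _ fun _ hj ↦
    Submodule.smul_mem _ _ (sequence_mem_degreeLT S (Finset.mem_range.1 hj))

theorem eval_cdKernel_self (S : Polynomial.Sequence F) (n : ℕ) (x : F) :
    (cdKernel S n x).eval x = ∑ j ∈ Finset.range (n + 1), (S j).eval x ^ 2 := by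
  simp [cdKernel, eval_finsetSum, pow_two]

theorem X_mul_sub_jacobiCoeff_smul_mem_degreeLT (S : Polynomial.Sequence F) (n : ℕ) :
    X * S n - jacobiCoeff S n • S (n + 1) ∈ degreeLT F (n + 1) := by
  have lc_ne (m : ℕ) : (S m).leadingCoeff ≠ 0 := leadingCoeff_ne_zero.2 (S.ne_zero m)
  have coeff_ne : jacobiCoeff S n ≠ 0 := div_ne_zero (lc_ne n) (lc_ne (n + 1))
  have degree_X_mul : (X * S n).degree = ((n + 1 : ℕ) : WithBot ℕ) := by
    rw [degree_mul, degree_X, S.degree_eq, add_comm, Nat.cast_succ]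
  rw [mem_degreeLT, ← degree_X_mul, smul_eq_C_mul]
  refine degree_sub_lt_left ?_ (mul_ne_zero X_ne_zero (S.ne_zero n)) ?_
  · rw [degree_X_mul, degree_C_mul coeff_ne, S.degree_eq]
  · rw [leadingCoeff_mul, leadingCoeff_X, one_mul, leadingCoeff_mul, leadingCoeff_C, jacobiCoeff,
      div_mul_cancel₀ _ (lc_ne (n + 1))]

namespace IsOrthonormalFor

theorem eq_sum_apply_mul_smul (h : IsOrthonormalFor L S) {N : ℕ} {q : F[X]}
    (hq : q ∈ degreeLT F N) : q = ∑ j ∈ Finset.range N, L (q * S j) • S j := by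
  rw [← span_sequence_eq_degreeLT S N] at hq
  induction hq using Submodule.span_induction with
  | mem _ hmem =>
    obtain ⟨i, hi, rfl⟩ := hmem
    simp [h i, Set.mem_Iio.1 hi]
  | zero => simp
  | add q r _ _ hq hr =>
    nth_rw 1 [hq, hr]
    simp only [add_mul, map_add, add_smul, Finset.sum_add_distrib]
  | smul c q _ hq =>
    nth_rw 1 [hq]
    simp only [smul_mul_assoc, map_smul, smul_assoc, Finset.smul_sum]

theorem apply_mul_eq_zero (h : IsOrthonormalFor L S) {m : ℕ} {q : F[X]}
    (hq : q ∈ degreeLT F m) : L (q * S m) = 0 := by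
  rw [h.eq_sum_apply_mul_smul hq, Finset.sum_mul, map_sum]
  refine Finset.sum_eq_zero fun j hj ↦ ?_
  rw [smul_mul_assoc, map_smul, h, if_neg (Finset.mem_range.1 hj).ne, smul_zero]

theorem apply_mul_cdKernel (h : IsOrthonormalFor L S) {n : ℕ} {q : F[X]}
    (hq : q ∈ degreeLT F (n + 1)) (x : F) : L (q * cdKernel S n x) = q.eval x := by
  conv_rhs => rw [h.eq_sum_apply_mul_smul hq]
  simp only [cdKernel, Finset.mul_sum, map_sum, mul_smul_comm, map_smul, eval_finsetSum, eval_smul,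
    smul_eq_mul, mul_comm]

theorem apply_cdKernel_sq (h : IsOrthonormalFor L S) (n : ℕ) (x : F) :
    L (cdKernel S n x ^ 2) = (cdKernel S n x).eval x := by
  rw [pow_two, h.apply_mul_cdKernel (cdKernel_mem_degreeLT S n x)]

theorem apply_succ_mul_cdKernel (h : IsOrthonormalFor L S) (n : ℕ) (x : F) :
    L (S (n + 1) * cdKernel S n x) = 0 := by
  rw [mul_comm]
  exact h.apply_mul_eq_zero (cdKernel_mem_degreeLT S n x)

theorem apply_X_mul_mul_succ (h : IsOrthonormalFor L S) (n : ℕ) :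
    L (X * S n * S (n + 1)) = jacobiCoeff S n := by
  have lower := h.apply_mul_eq_zero (X_mul_sub_jacobiCoeff_smul_mem_degreeLT S n)
  rw [sub_mul, map_sub, smul_mul_assoc, map_smul, h, if_pos rfl, smul_eq_mul, mul_one] at lower
  exact sub_eq_zero.1 lower

theorem apply_X_sub_C_mul_cdKernel_mul_of_lt (h : IsOrthonormalFor L S) {j n : ℕ} (hj : j < n)
    (x : F) : L ((X - C x) * cdKernel S n x * S j) = 0 := by
  have hmem : (X - C x) * S j ∈ degreeLT F (n + 1) :=
    mul_mem_degreeLT_add (degree_X_sub_C_le x) (sequence_mem_degreeLT S hj)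
  rw [mul_right_comm, h.apply_mul_cdKernel hmem]
  simp

theorem apply_X_sub_C_mul_cdKernel_mul_self (h : IsOrthonormalFor L S) (n : ℕ) (x : F) :
    L ((X - C x) * cdKernel S n x * S n) = -(jacobiCoeff S n * (S (n + 1)).eval x) := by
  set lower := X * S n - jacobiCoeff S n • S (n + 1) - x • S n with lower_def
  have hmem : lower ∈ degreeLT F (n + 1) :=
    Submodule.sub_mem _ (X_mul_sub_jacobiCoeff_smul_mem_degreeLT S n)
      (Submodule.smul_mem _ _ (sequence_mem_degreeLT S n.lt_succ_self))
  have split : (X - C x) * S n = lower + jacobiCoeff S n • S (n + 1) := by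
    rw [lower_def, smul_eq_C_mul x]
    ring
  rw [mul_right_comm, split, add_mul, map_add, smul_mul_assoc, map_smul,
    h.apply_succ_mul_cdKernel, h.apply_mul_cdKernel hmem]
  simp [lower_def]

theorem apply_X_sub_C_mul_cdKernel_mul_succ (h : IsOrthonormalFor L S) (n : ℕ) (x : F) :
    L ((X - C x) * cdKernel S n x * S (n + 1)) = jacobiCoeff S n * (S n).eval x := by
  have hlower : ∀ j ∈ Finset.range n, L (X * S j * S (n + 1)) = 0 := fun j hj ↦
    h.apply_mul_eq_zero
      (mul_mem_degreeLT_add degree_X_le (sequence_mem_degreeLT S (Finset.mem_range.1 hj)))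
  have hX : L (X * cdKernel S n x * S (n + 1)) = (S n).eval x * jacobiCoeff S n := by
    simp only [cdKernel, Finset.mul_sum, Finset.sum_mul, map_sum, mul_smul_comm, smul_mul_assoc,
      map_smul, smul_eq_mul]
    rw [Finset.sum_range_succ, h.apply_X_mul_mul_succ,
      Finset.sum_eq_zero fun j hj ↦ by rw [hlower j hj, mul_zero], zero_add]
  rw [sub_mul, sub_mul, map_sub, hX, mul_assoc, ← smul_eq_C_mul, map_smul,
    mul_comm (cdKernel S n x), h.apply_succ_mul_cdKernel, smul_zero, sub_zero, mul_comm]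

theorem X_sub_C_mul_cdKernel (h : IsOrthonormalFor L S) (n : ℕ) (x : F) :
    (X - C x) * cdKernel S n x =
      jacobiCoeff S n • ((S n).eval x • S (n + 1) - (S (n + 1)).eval x • S n) := by
  have hmem : (X - C x) * cdKernel S n x ∈ degreeLT F (n + 1 + 1) :=
    mul_mem_degreeLT_add (degree_X_sub_C_le x) (cdKernel_mem_degreeLT S n x)
  rw [h.eq_sum_apply_mul_smul hmem, Finset.sum_range_succ, Finset.sum_range_succ,
    Finset.sum_eq_zero fun j hj ↦ by
      rw [h.apply_X_sub_C_mul_cdKernel_mul_of_lt (Finset.mem_range.1 hj), zero_smul],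
    h.apply_X_sub_C_mul_cdKernel_mul_self, h.apply_X_sub_C_mul_cdKernel_mul_succ, zero_add]
  simp only [smul_sub, smul_smul, neg_smul]
  abel

theorem eval_cdKernel_self_eq_derivative (h : IsOrthonormalFor L S) (n : ℕ) (x : F) :
    (cdKernel S n x).eval x = jacobiCoeff S n *
      ((S n).eval x * (derivative (S (n + 1))).eval x -
        (S (n + 1)).eval x * (derivative (S n)).eval x) := by
  have := congrArg (fun q ↦ (derivative q).eval x) (h.X_sub_C_mul_cdKernel n x)
  simpa [derivative_mul] using this

theorem apply_X_sub_C_mul_cdKernel_sq (h : IsOrthonormalFor L S) (n : ℕ) (x : F) :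
    L ((X - C x) * cdKernel S n x ^ 2) =
      -(jacobiCoeff S n * (S (n + 1)).eval x * (S n).eval x) := by
  rw [pow_two, ← mul_assoc, h.X_sub_C_mul_cdKernel, smul_mul_assoc, sub_mul, smul_mul_assoc,
    smul_mul_assoc, map_smul, map_sub, map_smul, map_smul, h.apply_succ_mul_cdKernel,
    h.apply_mul_cdKernel (sequence_mem_degreeLT S n.lt_succ_self)]
  simp only [smul_eq_mul]
  ring

end IsOrthonormalFor

end AlgebraicTheory

section PositiveFunctionals

variable {L : ℝ[X] →ₗ[ℝ] ℝ} {S : Polynomial.Sequence ℝ}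

/-- The functional `L` is nonnegative on polynomials that are nonnegative on `s`, as is integration
against a measure concentrated on `s`. -/
def IsPositiveOn (L : ℝ[X] →ₗ[ℝ] ℝ) (s : Set ℝ) : Prop :=
  ∀ q : ℝ[X], (∀ y ∈ s, 0 ≤ q.eval y) → 0 ≤ L q

namespace IsPositiveOn

variable {s t : Set ℝ}

theorem mono (hL : IsPositiveOn L s) (hst : s ⊆ t) : IsPositiveOn L t :=
  fun q hq ↦ hL q fun y hy ↦ hq y (hst hy)

theorem apply_le_apply (hL : IsPositiveOn L s) {q r : ℝ[X]}
    (hqr : ∀ y ∈ s, q.eval y ≤ r.eval y) : L q ≤ L r := by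
  rw [← sub_nonneg, ← map_sub]
  exact hL _ fun y hy ↦ by simpa only [eval_sub, sub_nonneg] using hqr y hy

theorem sq_apply_mul_le (hL : IsPositiveOn L s) (q r : ℝ[X]) :
    L (q * r) ^ 2 ≤ L (q ^ 2) * L (r ^ 2) := by
  simpa [pow_two, mul_comm r q] using
    LinearMap.BilinForm.apply_mul_apply_le_of_forall_zero_le ((LinearMap.mul ℝ ℝ[X]).compr₂ L)
      (fun q ↦ hL (q * q) fun y _ ↦ by simpa only [eval_mul] using mul_self_nonneg (q.eval y)) q r

theorem apply_X_pow_mul_sq_le {M : ℝ} (hL : IsPositiveOn L (Set.Icc (-M) M)) (k : ℕ) (q : ℝ[X]) :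
    L ((X ^ k * q) ^ 2) ≤ M ^ (2 * k) * L (q ^ 2) := by
  rw [← smul_eq_mul (M ^ _), ← map_smul]
  refine hL.apply_le_apply fun y hy ↦ ?_
  have hpow : y ^ (2 * k) ≤ M ^ (2 * k) := by
    rw [pow_mul, pow_mul]
    exact pow_le_pow_left₀ (sq_nonneg y) (sq_le_sq' hy.1 hy.2) k
  simp only [eval_pow, eval_mul, eval_X, eval_smul, smul_eq_mul, mul_pow]
  rw [← pow_mul, mul_comm k]
  gcongr

end IsPositiveOn

theorem continuous_abs_pow_mul_eval_cdKernel (S : Polynomial.Sequence ℝ) (m k : ℕ) :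
    Continuous fun x ↦ |x| ^ k * (cdKernel S m x).eval x := by
  simp only [eval_cdKernel_self]
  fun_prop

theorem eval_cdKernel_self_pos (S : Polynomial.Sequence ℝ) (n : ℕ) (x : ℝ) :
    0 < (cdKernel S n x).eval x := by
  have hzero : (S 0).eval x ≠ 0 := by
    have hC := eq_C_of_degree_eq_zero (S.degree_eq 0)
    rw [hC, eval_C]
    exact C_ne_zero.1 (hC ▸ S.ne_zero 0)
  rw [eval_cdKernel_self]
  exact Finset.sum_pos' (fun j _ ↦ sq_nonneg _) ⟨0, by simp, by positivity⟩

namespace IsOrthonormalFor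

theorem sq_eval_le (h : IsOrthonormalFor L S) {s : Set ℝ} (hL : IsPositiveOn L s) {n : ℕ}
    {q : ℝ[X]} (hq : q ∈ degreeLT ℝ (n + 1)) (x : ℝ) :
    q.eval x ^ 2 ≤ L (q ^ 2) * (cdKernel S n x).eval x := by
  rw [← h.apply_mul_cdKernel hq, ← h.apply_cdKernel_sq]
  exact hL.sq_apply_mul_le q _

-- This is the Cauchy–Schwarz bound `sq_eval_le` for `X ^ k * K_m(x, ·)`, evaluated at `x`.
theorem pow_mul_eval_cdKernel_le (h : IsOrthonormalFor L S) {M : ℝ}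
    (hL : IsPositiveOn L (Set.Icc (-M) M)) (m k : ℕ) (x : ℝ) :
    x ^ (2 * k) * (cdKernel S m x).eval x ≤ M ^ (2 * k) * (cdKernel S (m + k) x).eval x := by
  have hmem : X ^ k * cdKernel S m x ∈ degreeLT ℝ (m + k + 1) := by
    rw [add_right_comm]
    exact mul_mem_degreeLT_add (degree_X_pow_le k) (cdKernel_mem_degreeLT S m x)
  have hsq := (h.sq_eval_le hL hmem x).trans <|
    mul_le_mul_of_nonneg_right (hL.apply_X_pow_mul_sq_le k _) (eval_cdKernel_self_pos S _ x).le
  rw [eval_mul, eval_pow, eval_X, h.apply_cdKernel_sq] at hsq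
  refine le_of_mul_le_mul_right ?_ (eval_cdKernel_self_pos S m x)
  linear_combination hsq

theorem radius_pos (h : IsOrthonormalFor L S) {M : ℝ} (hL : IsPositiveOn L (Set.Icc (-M) M)) :
    0 < M := by
  rcases lt_trichotomy M 0 with hM | rfl | hM
  · have hone := hL (-(S 0 * S 0)) fun y hy ↦ by linarith [hy.1, hy.2]
    rw [map_neg, h, if_pos rfl] at hone
    norm_num at hone
  · have hle := h.pow_mul_eval_cdKernel_le hL 0 1 1
    norm_num at hle
    exact (hle.not_gt (eval_cdKernel_self_pos S 0 1)).elim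
  · exact hM

theorem jacobiCoeff_mul_mul_pos_of_gt (h : IsOrthonormalFor L S) {M x : ℝ}
    (hL : IsPositiveOn L (Set.Iic M)) (hx : M < x) (n : ℕ) :
    0 < jacobiCoeff S n * (S (n + 1)).eval x * (S n).eval x := by
  have hlow : L ((x - M) • cdKernel S n x ^ 2) ≤ L (-((X - C x) * cdKernel S n x ^ 2)) :=
    hL.apply_le_apply fun y (hy : y ≤ M) ↦ by
      simp only [eval_smul, eval_neg, eval_mul, eval_pow, eval_sub, eval_X, eval_C, smul_eq_mul]
      rw [← neg_mul, neg_sub]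
      gcongr
  rw [map_smul, map_neg, h.apply_X_sub_C_mul_cdKernel_sq, h.apply_cdKernel_sq, neg_neg] at hlow
  exact (mul_pos (sub_pos.2 hx) (eval_cdKernel_self_pos S n x)).trans_le hlow

theorem jacobiCoeff_mul_mul_neg_of_lt (h : IsOrthonormalFor L S) {M x : ℝ}
    (hL : IsPositiveOn L (Set.Ici M)) (hx : x < M) (n : ℕ) :
    jacobiCoeff S n * (S (n + 1)).eval x * (S n).eval x < 0 := by
  have hlow : L ((M - x) • cdKernel S n x ^ 2) ≤ L ((X - C x) * cdKernel S n x ^ 2) :=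
    hL.apply_le_apply fun y (hy : M ≤ y) ↦ by
      simp only [eval_smul, eval_mul, eval_pow, eval_sub, eval_X, eval_C, smul_eq_mul]
      gcongr
  rw [map_smul, h.apply_X_sub_C_mul_cdKernel_sq, h.apply_cdKernel_sq] at hlow
  exact neg_pos.1 ((mul_pos (sub_pos.2 hx) (eval_cdKernel_self_pos S n x)).trans_le hlow)

end IsOrthonormalFor

end PositiveFunctionals

section PruferVariables

variable {L : ℝ[X] →ₗ[ℝ] ℝ} {S : Polynomial.Sequence ℝ} {M : ℝ}

/-- The squared Prüfer radius `a_{n+1}² p_{n+1}² + p_n²`, the denominator of the density of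
`ρ_n`. -/
noncomputable def pruferRadiusSq (S : Polynomial.Sequence ℝ) (n : ℕ) (x : ℝ) : ℝ :=
  jacobiCoeff S n ^ 2 * (S (n + 1)).eval x ^ 2 + (S n).eval x ^ 2

/-- The Prüfer angle of the vector `(p_n, a_{n+1} p_{n+1})`, taken modulo `π` in `(-π/2, π/2)`; at
the zeros of `p_n` division by zero gives it the value `0`. -/
noncomputable def pruferAngle (S : Polynomial.Sequence ℝ) (n : ℕ) (x : ℝ) : ℝ :=
  Real.arctan (jacobiCoeff S n * (S (n + 1)).eval x / (S n).eval x)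

theorem pruferRadiusSq_nonneg (S : Polynomial.Sequence ℝ) (n : ℕ) (x : ℝ) :
    0 ≤ pruferRadiusSq S n x := by
  unfold pruferRadiusSq
  positivity

theorem continuous_pruferRadiusSq (S : Polynomial.Sequence ℝ) (n : ℕ) :
    Continuous (pruferRadiusSq S n) := by
  unfold pruferRadiusSq
  fun_prop

namespace IsOrthonormalFor

theorem hasDerivAt_pruferAngle (h : IsOrthonormalFor L S) (n : ℕ) {x : ℝ}
    (hx : (S n).eval x ≠ 0) :
    HasDerivAt (pruferAngle S n) ((cdKernel S n x).eval x / pruferRadiusSq S n x) x := by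
  have hderiv :=
    ((((S (n + 1)).hasDerivAt x).const_mul (jacobiCoeff S n)).div ((S n).hasDerivAt x) hx).arctan
  refine hderiv.congr_deriv ?_
  have hradius : pruferRadiusSq S n x ≠ 0 := by unfold pruferRadiusSq; positivity
  rw [h.eval_cdKernel_self_eq_derivative]
  unfold pruferRadiusSq at *
  simp only [Pi.div_apply]
  field_simp
  ring

theorem pruferAngle_mem_Icc_of_gt (h : IsOrthonormalFor L S) (hL : IsPositiveOn L (Set.Iic M))
    (n : ℕ) {x : ℝ} (hx : M < x) : pruferAngle S n x ∈ Set.Icc 0 (π / 2) := by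
  refine ⟨Real.arctan_nonneg.2 ?_, (Real.arctan_lt_pi_div_two _).le⟩
  exact (div_pos_iff.2 (mul_pos_iff.1 (h.jacobiCoeff_mul_mul_pos_of_gt hL hx n))).le

theorem pruferAngle_mem_Icc_of_lt (h : IsOrthonormalFor L S) (hL : IsPositiveOn L (Set.Ici M))
    (n : ℕ) {x : ℝ} (hx : x < M) : pruferAngle S n x ∈ Set.Icc (-(π / 2)) 0 := by
  refine ⟨(Real.neg_pi_div_two_lt_arctan _).le, Real.arctan_le_zero.2 ?_⟩
  exact (div_neg_iff.2 (mul_neg_iff.1 (h.jacobiCoeff_mul_mul_neg_of_lt hL hx n))).le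

theorem setLIntegral_cdKernel_div_pruferRadiusSq_le (h : IsOrthonormalFor L S) (n : ℕ)
    {s : Set ℝ} (hs : Convex ℝ s) (hne : ∀ x ∈ s, (S n).eval x ≠ 0) {α β : ℝ}
    (hmaps : Set.MapsTo (pruferAngle S n) s (Set.Icc α β)) :
    ∫⁻ x in s, ENNReal.ofReal ((cdKernel S n x).eval x / pruferRadiusSq S n x) ≤
      ENNReal.ofReal (β - α) :=
  setLIntegral_deriv_le_of_mapsTo_Icc hs (fun x hx ↦ h.hasDerivAt_pruferAngle n (hne x hx))
    (fun x _ ↦ div_nonneg (eval_cdKernel_self_pos S n x).le (pruferRadiusSq_nonneg S n x)) hmaps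

theorem setLIntegral_cdKernel_div_pruferRadiusSq_le_pi (h : IsOrthonormalFor L S)
    (hL : IsPositiveOn L (Set.Icc (-M) M)) (n : ℕ) :
    ∫⁻ x in {x | M < |x|}, ENNReal.ofReal ((cdKernel S n x).eval x / pruferRadiusSq S n x) ≤
      ENNReal.ofReal π := by
  have hIic := hL.mono Set.Icc_subset_Iic_self
  have hIci := hL.mono Set.Icc_subset_Ici_self
  have hright := h.setLIntegral_cdKernel_div_pruferRadiusSq_le n (convex_Ioi M)
    (fun x hx ↦ right_ne_zero_of_mul (h.jacobiCoeff_mul_mul_pos_of_gt hIic hx n).ne')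
    (fun x hx ↦ h.pruferAngle_mem_Icc_of_gt hIic n hx)
  have hleft := h.setLIntegral_cdKernel_div_pruferRadiusSq_le n (convex_Iio (-M))
    (fun x hx ↦ right_ne_zero_of_mul (h.jacobiCoeff_mul_mul_neg_of_lt hIci hx n).ne)
    (fun x hx ↦ h.pruferAngle_mem_Icc_of_lt hIci n hx)
  have hset : {x : ℝ | M < |x|} ⊆ Set.Ioi M ∪ Set.Iio (-M) :=
    fun x (hx : M < |x|) ↦ (lt_abs.1 hx).imp_right lt_neg_of_lt_neg
  refine ((lintegral_mono_set hset).trans (lintegral_union_le _ _ _)).trans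
    ((add_le_add hright hleft).trans_eq ?_)
  rw [← ENNReal.ofReal_add (by linarith [Real.pi_pos]) (by linarith [Real.pi_pos])]
  congr 1
  ring

end IsOrthonormalFor

end PruferVariables

section Measures

/-- Integration of polynomials against a measure with finite moments, as a linear functional. -/
noncomputable def integralFunctional (μ : Measure ℝ)
    (hμ : ∀ q : ℝ[X], Integrable (fun x ↦ q.eval x) μ) : ℝ[X] →ₗ[ℝ] ℝ where
  toFun q := ∫ x, q.eval x ∂μ
  map_add' q r := by simpa only [eval_add] using integral_add (hμ q) (hμ r)
  map_smul' c q := by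
    simpa only [eval_smul, RingHom.id_apply] using integral_smul c fun x ↦ q.eval x

theorem isPositiveOn_integralFunctional {μ : Measure ℝ}
    (hμ : ∀ q : ℝ[X], Integrable (fun x ↦ q.eval x) μ) {s : Set ℝ} (hs : ∀ᵐ x ∂μ, x ∈ s) :
    IsPositiveOn (integralFunctional μ hμ) s :=
  fun _ hq ↦ integral_nonneg_of_ae (hs.mono hq)

theorem integrable_eval_of_ae_mem_isCompact {μ : Measure ℝ} [IsFiniteMeasure μ] {s : Set ℝ}
    (hs : IsCompact s) (hμ : ∀ᵐ x ∂μ, x ∈ s) (q : ℝ[X]) : Integrable (fun x ↦ q.eval x) μ := by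
  rw [← Measure.restrict_eq_self_of_ae_mem hμ]
  exact q.continuous.continuousOn.integrableOn_compact hs

theorem measSupport_eq_support {α : Type*} [TopologicalSpace α] [MeasurableSpace α]
    (μ : Measure α) : measSupport μ = μ.support := by
  rw [Measure.support_eq_forall_isOpen]
  simp only [measSupport, pos_iff_ne_zero, imp.swap]

end Measures

section Main

variable {L : ℝ[X] →ₗ[ℝ] ℝ} {S : Polynomial.Sequence ℝ} {M R : ℝ}

/-- The density `1 / (π (a_{n+1}² p_{n+1}² + p_n²))` of `ρ_n`. -/
noncomputable def pruferDensity (S : Polynomial.Sequence ℝ) (n : ℕ) (x : ℝ) : ℝ :=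
  (π * pruferRadiusSq S n x)⁻¹

/-- The measure written `ρ_n` in the paper, the spectral measure averaged over Cauchy-distributed
boundary perturbations of the truncated Jacobi matrix. -/
noncomputable def pruferMeasure (S : Polynomial.Sequence ℝ) (n : ℕ) : Measure ℝ :=
  volume.withDensity fun x ↦ ENNReal.ofReal (pruferDensity S n x)

theorem pruferDensity_nonneg (S : Polynomial.Sequence ℝ) (n : ℕ) (x : ℝ) :
    0 ≤ pruferDensity S n x :=
  inv_nonneg.2 (mul_nonneg Real.pi_nonneg (pruferRadiusSq_nonneg S n x))

theorem measurable_pruferDensity (S : Polynomial.Sequence ℝ) (n : ℕ) :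
    Measurable (pruferDensity S n) :=
  (measurable_const.mul (continuous_pruferRadiusSq S n).measurable).inv

namespace IsOrthonormalFor

theorem abs_pow_mul_eval_cdKernel_le (h : IsOrthonormalFor L S)
    (hL : IsPositiveOn L (Set.Icc (-M) M)) (hR : 0 < R) (m k : ℕ) {x : ℝ} (hx : R < |x|) :
    |x| ^ k * (cdKernel S m x).eval x ≤
      M ^ (2 * k) / R ^ k * (cdKernel S (m + k) x).eval x := by
  have hkernel := eval_cdKernel_self_pos S m x
  rw [div_mul_eq_mul_div, le_div_iff₀ (pow_pos hR k)]
  calc |x| ^ k * (cdKernel S m x).eval x * R ^ k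
      ≤ |x| ^ k * (cdKernel S m x).eval x * |x| ^ k := by gcongr
    _ = x ^ (2 * k) * (cdKernel S m x).eval x := by
        rw [pow_mul, ← sq_abs, ← pow_mul]
        ring
    _ ≤ _ := h.pow_mul_eval_cdKernel_le hL m k x

theorem pruferDensity_mul_le (h : IsOrthonormalFor L S)
    (hL : IsPositiveOn L (Set.Icc (-M) M)) (hR : 0 < R) (m k : ℕ) {x : ℝ} (hx : R < |x|) :
    pruferDensity S (m + k) x * (|x| ^ k * (cdKernel S m x).eval x) ≤
      M ^ (2 * k) / R ^ k / π * ((cdKernel S (m + k) x).eval x / pruferRadiusSq S (m + k) x) := by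
  refine (mul_le_mul_of_nonneg_left (h.abs_pow_mul_eval_cdKernel_le hL hR m k hx)
    (pruferDensity_nonneg S (m + k) x)).trans_eq ?_
  rw [pruferDensity, mul_inv]
  ring

theorem setLIntegral_abs_pow_mul_cdKernel_le (h : IsOrthonormalFor L S)
    (hL : IsPositiveOn L (Set.Icc (-M) M)) (hMR : M ≤ R) (m k : ℕ) :
    ∫⁻ x in {x | R < |x|}, ENNReal.ofReal (|x| ^ k * (cdKernel S m x).eval x)
        ∂pruferMeasure S (m + k) ≤ ENNReal.ofReal (M ^ (2 * k) / R ^ k) := by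
  set c := M ^ (2 * k) / R ^ k
  have hR : 0 < R := (h.radius_pos hL).trans_le hMR
  have hc : 0 ≤ c := div_nonneg ((even_two_mul k).pow_nonneg M) (pow_pos hR k).le
  have hset : MeasurableSet {x : ℝ | R < |x|} := measurableSet_lt measurable_const measurable_abs
  have hdensity := (measurable_pruferDensity S (m + k)).ennreal_ofReal
  have hweight := (continuous_abs_pow_mul_eval_cdKernel S m k).measurable.ennreal_ofReal
  rw [pruferMeasure, setLIntegral_withDensity_eq_setLIntegral_mul _ hdensity hweight hset]
  calc _ ≤ ∫⁻ x in {x | R < |x|}, ENNReal.ofReal (c / π) *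
          ENNReal.ofReal ((cdKernel S (m + k) x).eval x / pruferRadiusSq S (m + k) x) := by
        refine setLIntegral_mono' hset fun x hx ↦ ?_
        rw [Pi.mul_apply, ← ENNReal.ofReal_mul (pruferDensity_nonneg S (m + k) x),
          ← ENNReal.ofReal_mul (by positivity)]
        exact ENNReal.ofReal_le_ofReal (h.pruferDensity_mul_le hL hR m k hx)
    _ = ENNReal.ofReal (c / π) * ∫⁻ x in {x | R < |x|},
          ENNReal.ofReal ((cdKernel S (m + k) x).eval x / pruferRadiusSq S (m + k) x) :=
        lintegral_const_mul' _ _ ENNReal.ofReal_ne_top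
    _ ≤ ENNReal.ofReal (c / π) * ENNReal.ofReal π := by
        gcongr
        exact (lintegral_mono_set fun x hx ↦ hMR.trans_lt hx).trans
          (h.setLIntegral_cdKernel_div_pruferRadiusSq_le_pi hL (m + k))
    _ = ENNReal.ofReal c := by
        rw [← ENNReal.ofReal_mul (by positivity), div_mul_cancel₀ _ Real.pi_ne_zero]

theorem integrableOn_and_setIntegral_abs_pow_mul_cdKernel_le (h : IsOrthonormalFor L S)
    (hL : IsPositiveOn L (Set.Icc (-M) M)) (hMR : M ≤ R) (m k : ℕ) :
    IntegrableOn (fun x ↦ |x| ^ k * (cdKernel S m x).eval x) {x | R < |x|}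
        (pruferMeasure S (m + k)) ∧
      ∫ x in {x | R < |x|}, |x| ^ k * (cdKernel S m x).eval x ∂pruferMeasure S (m + k) ≤
        M ^ (2 * k) / R ^ k := by
  have hR : 0 < R := (h.radius_pos hL).trans_le hMR
  exact integrable_and_integral_le_of_lintegral_ofReal_le
    (continuous_abs_pow_mul_eval_cdKernel S m k).aestronglyMeasurable
    (ae_of_all _ fun x ↦ mul_nonneg (by positivity) (eval_cdKernel_self_pos S m x).le)
    (div_nonneg ((even_two_mul k).pow_nonneg M) (pow_pos hR k).le)
    (h.setLIntegral_abs_pow_mul_cdKernel_le hL hMR m k)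

end IsOrthonormalFor

theorem stmt_15_general
    (μ : Measure ℝ) [IsFiniteMeasure μ] (M R : ℝ) (hMR : M ≤ R)
    (hsupp : measSupport μ ⊆ Set.Icc (-M) M)
    (p : ℕ → Polynomial ℝ)
    (hdeg : ∀ m, (p m).natDegree = m)
    (horth : ∀ m l, ∫ x, (p m).eval x * (p l).eval x ∂μ = if m = l then 1 else 0)
    (k n : ℕ) (hkn : k ≤ n)
    (a : ℝ) (ha : a = (p n).leadingCoeff / (p (n + 1)).leadingCoeff)
    (ρ : Measure ℝ)
    (hρ : ρ = volume.withDensity (fun x ↦ ENNReal.ofReal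
      ((π * (a ^ 2 * ((p (n + 1)).eval x) ^ 2 + ((p n).eval x) ^ 2))⁻¹))) :
    IntegrableOn (fun x ↦ |x| ^ k * (∑ j ∈ Finset.range (n - k + 1), ((p j).eval x) ^ 2))
        {x : ℝ | R < |x|} ρ ∧
      ∫ x in {x : ℝ | R < |x|},
          |x| ^ k * (∑ j ∈ Finset.range (n - k + 1), ((p j).eval x) ^ 2) ∂ρ ≤
        M ^ (2 * k) / R ^ k := by
  obtain ⟨m, rfl⟩ := Nat.exists_eq_add_of_le' hkn
  subst ha hρ
  have hp (m : ℕ) : p m ≠ 0 := fun hzero ↦ by simpa [hzero] using horth m m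
  let S : Polynomial.Sequence ℝ := ⟨p, fun m ↦ by rw [degree_eq_natDegree (hp m), hdeg]⟩
  have hae : ∀ᵐ x ∂μ, x ∈ Set.Icc (-M) M :=
    mem_of_superset Measure.support_mem_ae (measSupport_eq_support μ ▸ hsupp)
  have hint := integrable_eval_of_ae_mem_isCompact isCompact_Icc hae
  have horthonormal : IsOrthonormalFor (integralFunctional μ hint) S := fun m l ↦ by
    simpa only [integralFunctional, LinearMap.coe_mk, AddHom.coe_mk, eval_mul] using horth m l
  have key := horthonormal.integrableOn_and_setIntegral_abs_pow_mul_cdKernel_le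
    (isPositiveOn_integralFunctional hint hae) hMR m k
  simp only [eval_cdKernel_self] at key
  rwa [Nat.add_sub_cancel]

end Main

/-- For `μ` a probability measure on `ℝ` with infinite support in `[-M, M]`,
CD kernel `K_n`, `a_{n+1} = κ_n/κ_{n+1}` and
`dρ_n = dx/(π(a_{n+1}² p_{n+1}² + p_n²))`, for every `k` and all `n ≥ k`,
`∫_{|x| > M+1} |x|^k K_{n-k}(x,x;μ) dρ_n(x) ≤ M^{2k}/(M+1)^k`; in particular
this integral is bounded uniformly in `n`. -/
theorem stmt_15
    (μ : Measure ℝ) [IsProbabilityMeasure μ] (M : ℝ)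
    (hsupp : measSupport μ ⊆ Set.Icc (-M) M)
    (hinf : (measSupport μ).Infinite)
    (p : ℕ → Polynomial ℝ)
    (hdeg : ∀ m, (p m).natDegree = m)
    (hlead : ∀ m, 0 < (p m).leadingCoeff)
    (horth : ∀ m l, ∫ x, (p m).eval x * (p l).eval x ∂μ = if m = l then 1 else 0)
    (k n : ℕ) (hkn : k ≤ n)
    (a : ℝ) (ha : a = (p n).leadingCoeff / (p (n + 1)).leadingCoeff)
    (ρ : Measure ℝ)
    (hρ : ρ = volume.withDensity (fun x => ENNReal.ofReal
      ((π * (a ^ 2 * ((p (n + 1)).eval x) ^ 2 + ((p n).eval x) ^ 2))⁻¹))) :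
    ∫ x in {x : ℝ | M + 1 < |x|},
        |x| ^ k * (∑ j ∈ Finset.range (n - k + 1), ((p j).eval x) ^ 2) ∂ρ ≤
      M ^ (2 * k) / (M + 1) ^ k := by
  exact (stmt_15_general μ M (M + 1) (by linarith) hsupp p hdeg horth k n hkn a ha ρ hρ).2
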